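/- Let 1 < j < k ≤ n with k ≥ 5, and set d = k−j, q = ⌊k/d⌋, r = k mod d. Suppose r = 2. Then the order of f_1 f_{j−1} f_{k−1} in S_n equals: q(q+1) if d = 3, or if d ≥ 4 and q is odd; and 2q(q+1) if d ≥ 4 and q is even. -/

import Mathlib

/-- The pancake generator `f_m` of the symmetric group `S_n` on `{1,…,n}`, modeled as
`Equiv.Perm (Fin n)` (positions `0`-indexed): it reverses the first `m+1` entries, i.e.
it sends the position `a` to `m - a` whenever `a ≤ m` (and `m < n`), and fixes all other
positions.  (In `1`-indexed terms, `f_m a = m + 2 - a` for `1 ≤ a ≤ m+1` and `f_m a = a`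
for `m + 1 < a ≤ n`.) -/
def pancake (n m : ℕ) : Equiv.Perm (Fin n) :=
  Function.Involutive.toPerm
    (fun a => if h : (a : ℕ) ≤ m ∧ m < n then
        ⟨m - (a : ℕ), Nat.lt_of_le_of_lt (Nat.sub_le m a) h.2⟩ else a)
    (by
      intro a
      dsimp only
      by_cases h : (a : ℕ) ≤ m ∧ m < n
      · rw [dif_pos h, dif_pos ⟨Nat.sub_le m (a : ℕ), h.2⟩]
        exact Fin.ext (Nat.sub_sub_self h.1)
      · rw [dif_neg h, dif_neg h])

/-!
On `0`-indexed positions `a < k = q * d + 2`, the product `f_1 f_{j-1} f_{k-1}` reflects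
`a < d` to `k - 1 - a` and lowers `a ≥ d` by `d`, except that `d ↦ 1` and `d + 1 ↦ 0`.  Hence
`q` steps take `c < d` to `d + 1 - c`, and every orbit below `k` meets `{0, …, d - 1}`.  For
`c ≤ 1` one further step returns to `c`, giving two cycles of length `q + 1`.  For `c ≥ 2`
another `q` steps do, giving cycles of length `2 * q`, or `q` when `c = d + 1 - c`.  If `d = 3`,
the only such residue `c = 2` is self-paired; if `d ≥ 4`, the residue `2` is not.
-/

open Function

theorem minimalPeriod_eq_of_forall_two_mul_le {α : Type*} {f : α → α} {x : α} {N : ℕ}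
    (hN : 0 < N) (hx : IsPeriodicPt f N x)
    (hne : ∀ t, 0 < t → 2 * t ≤ N → f^[t] x ≠ x) : minimalPeriod f x = N := by
  refine (Nat.eq_of_dvd_of_lt_two_mul hN.ne' hx.minimalPeriod_dvd ?_).symm
  by_contra! hle
  exact hne _ (hx.minimalPeriod_pos hN) hle iterate_minimalPeriod

theorem lcm_succ_two_mul_of_odd {q : ℕ} (hq : Odd q) :
    Nat.lcm (q + 1) (2 * q) = q * (q + 1) := by
  obtain ⟨m, rfl⟩ := hq
  have hcop : Nat.Coprime (m + 1) (2 * m + 1) := by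
    rw [show 2 * m + 1 = m + (m + 1) by ring]; simp
  rw [show 2 * m + 1 + 1 = 2 * (m + 1) by ring, Nat.lcm_mul_left, hcop.lcm_eq_mul]
  ring

theorem lcm_succ_two_mul_of_even {q : ℕ} (hq : Even q) :
    Nat.lcm (q + 1) (2 * q) = 2 * q * (q + 1) := by
  have hcop : Nat.Coprime (q + 1) (2 * q) :=
    Nat.Coprime.mul_right hq.add_one.coprime_two_right (by simp)
  rw [hcop.lcm_eq_mul, mul_comm]

/-- The action of `f_1 f_{j-1} f_{k-1}` on `0`-indexed positions, in terms of `d = k - j`. It is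
extended by the identity to all of `ℕ`, so that orbits can be computed without carrying bounds. -/
def tripleMap (d k a : ℕ) : ℕ :=
  if a < d then k - 1 - a
  else if a = d then 1
  else if a = d + 1 then 0
  else if a < k then a - d
  else a

theorem pancake_apply_val {n m : ℕ} (hm : m < n) (a : Fin n) :
    (pancake n m a : ℕ) = if (a : ℕ) ≤ m then m - a else a := by
  simp only [pancake, Involutive.coe_toPerm, hm, and_true]
  split_ifs <;> rfl

theorem semiconj_val_tripleMap {n j d k : ℕ} (hj : 1 < j) (hjk : j + d = k) (hkn : k ≤ n) :
    Semiconj Fin.val (pancake n 1 * pancake n (j - 1) * pancake n (k - 1)) (tripleMap d k) := by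
  intro a
  simp only [Equiv.Perm.mul_apply]
  rw [pancake_apply_val (by omega), pancake_apply_val (by omega), pancake_apply_val (by omega)]
  unfold tripleMap
  split_ifs <;> omega

theorem isPeriodicPt_tripleMap_of_le {d k a : ℕ} (hdk : d + 2 ≤ k) (hka : k ≤ a) (m : ℕ) :
    IsPeriodicPt (tripleMap d k) m a := by
  apply IsFixedPt.isPeriodicPt
  unfold IsFixedPt tripleMap
  split_ifs <;> omega

theorem pancake_triple_pow_eq_one_iff {n j d k : ℕ} (hj : 1 < j) (hjk : j + d = k) (hkn : k ≤ n)
    (m : ℕ) :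
    (pancake n 1 * pancake n (j - 1) * pancake n (k - 1)) ^ m = 1 ↔
      ∀ a, IsPeriodicPt (tripleMap d k) m a := by
  have hval := (semiconj_val_tripleMap hj hjk hkn).iterate_right m
  rw [Equiv.Perm.iterate_eq_pow] at hval
  constructor
  · intro h a
    rcases lt_or_ge a k with hak | hka
    · rw [h] at hval
      exact (hval ⟨a, hak.trans_le hkn⟩).symm
    · exact isPeriodicPt_tripleMap_of_le (by omega) hka m
  · intro h
    ext a
    exact (hval a).trans (h a)

section Orbits

variable {d q : ℕ}

theorem tripleMap_iterate_succ {c s t : ℕ} (hc : c < d) (hq : s + t + 1 = q) :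
    (tripleMap d (q * d + 2))^[t + 1] c = d + 1 - c + s * d := by
  subst hq
  induction t generalizing s with
  | zero =>
    simp only [zero_add, iterate_one, tripleMap, if_pos hc, add_zero, Nat.succ_mul]
    omega
  | succ t ih =>
    have hs := ih (s := s + 1)
    rw [show s + 1 + t + 1 = s + (t + 1) + 1 by ring] at hs
    rw [iterate_succ_apply', hs]
    simp only [Nat.succ_mul, Nat.add_mul, tripleMap]
    split_ifs <;> omega

theorem tripleMap_iterate_quotient {c : ℕ} (hq : 0 < q) (hc : c < d) :
    (tripleMap d (q * d + 2))^[q] c = d + 1 - c := by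
  obtain ⟨t, rfl⟩ := Nat.exists_eq_add_of_le' hq
  simpa using tripleMap_iterate_succ (s := 0) hc (by omega)

theorem exists_tripleMap_iterate_eq {a : ℕ} (hd : 2 ≤ d) (ha : a < q * d + 2) :
    ∃ c < d, ∃ i, (tripleMap d (q * d + 2))^[i] c = a := by
  rcases lt_or_ge a 2 with ha_two | ha_two
  · exact ⟨a, by omega, 0, rfl⟩
  have hs : (a - 2) / d < q := Nat.div_lt_of_lt_mul (by rw [mul_comm]; omega)
  have hr : (a - 2) % d < d := Nat.mod_lt _ (by omega)
  have hdecomp : (a - 2) % d + (a - 2) / d * d = a - 2 := Nat.mod_add_div' _ _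
  refine ⟨d - 1 - (a - 2) % d, by omega, q - 1 - (a - 2) / d + 1, ?_⟩
  rw [tripleMap_iterate_succ (s := (a - 2) / d) (by omega) (by omega)]
  omega

theorem isPeriodicPt_tripleMap_of_forall_lt {m : ℕ} (hd : 2 ≤ d) (hq : 0 < q)
    (h : ∀ c < d, IsPeriodicPt (tripleMap d (q * d + 2)) m c) (a : ℕ) :
    IsPeriodicPt (tripleMap d (q * d + 2)) m a := by
  rcases lt_or_ge a (q * d + 2) with hak | hka
  · obtain ⟨c, hc, i, rfl⟩ := exists_tripleMap_iterate_eq hd hak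
    exact (h c hc).apply_iterate i
  · have := Nat.le_mul_of_pos_left d hq
    exact isPeriodicPt_tripleMap_of_le (by omega) hka m

theorem isPeriodicPt_tripleMap_of_lt_two {c : ℕ} (hd : 2 ≤ d) (hq : 0 < q) (hc : c < 2) :
    IsPeriodicPt (tripleMap d (q * d + 2)) (q + 1) c := by
  rw [IsPeriodicPt, IsFixedPt, iterate_succ_apply', tripleMap_iterate_quotient hq (by omega)]
  unfold tripleMap
  split_ifs <;> omega

theorem isPeriodicPt_tripleMap_of_two_le {c : ℕ} (hq : 0 < q) (hc : 2 ≤ c) (hcd : c < d) :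
    IsPeriodicPt (tripleMap d (q * d + 2)) (2 * q) c := by
  rw [IsPeriodicPt, IsFixedPt, two_mul, iterate_add_apply, tripleMap_iterate_quotient hq hcd,
    tripleMap_iterate_quotient hq (by omega)]
  omega

theorem minimalPeriod_tripleMap_zero (hd : 2 ≤ d) (hq : 0 < q) :
    minimalPeriod (tripleMap d (q * d + 2)) 0 = q + 1 := by
  refine minimalPeriod_eq_of_forall_two_mul_le q.succ_pos
    (isPeriodicPt_tripleMap_of_lt_two hd hq two_pos) fun t ht htq => ?_
  obtain ⟨t, rfl⟩ := Nat.exists_eq_add_of_le' ht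
  rw [tripleMap_iterate_succ (s := q - (t + 1)) (by omega) (by omega)]
  omega

theorem minimalPeriod_tripleMap_three_two (hq : 0 < q) :
    minimalPeriod (tripleMap 3 (q * 3 + 2)) 2 = q := by
  refine minimalPeriod_eq_of_forall_two_mul_le hq
    (tripleMap_iterate_quotient hq (by omega)) fun t ht htq => ?_
  obtain ⟨t, rfl⟩ := Nat.exists_eq_add_of_le' ht
  rw [tripleMap_iterate_succ (s := q - (t + 1)) (by omega) (by omega)]
  omega

theorem minimalPeriod_tripleMap_two_of_four_le (hd : 4 ≤ d) (hq : 0 < q) :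
    minimalPeriod (tripleMap d (q * d + 2)) 2 = 2 * q := by
  refine minimalPeriod_eq_of_forall_two_mul_le (by omega)
    (isPeriodicPt_tripleMap_of_two_le hq le_rfl (by omega)) fun t ht htq => ?_
  obtain ⟨t, rfl⟩ := Nat.exists_eq_add_of_le' ht
  rw [tripleMap_iterate_succ (s := q - (t + 1)) (by omega) (by omega)]
  omega

theorem isPeriodicPt_tripleMap_of_minimalPeriod_two_dvd {c m : ℕ} (hq : 0 < q) (hc : 2 ≤ c)
    (hcd : c < d) (hm : minimalPeriod (tripleMap d (q * d + 2)) 2 ∣ m) :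
    IsPeriodicPt (tripleMap d (q * d + 2)) m c := by
  rcases (show 3 ≤ d by omega).eq_or_lt with rfl | hd
  · obtain rfl : c = 2 := by omega
    exact isPeriodicPt_iff_minimalPeriod_dvd.mpr hm
  · rw [minimalPeriod_tripleMap_two_of_four_le hd hq] at hm
    exact (isPeriodicPt_tripleMap_of_two_le hq hc hcd).trans_dvd hm

theorem forall_isPeriodicPt_tripleMap_iff (hd : 2 ≤ d) (hq : 0 < q) (m : ℕ) :
    (∀ a, IsPeriodicPt (tripleMap d (q * d + 2)) m a) ↔
      q + 1 ∣ m ∧ minimalPeriod (tripleMap d (q * d + 2)) 2 ∣ m := by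
  constructor
  · intro h
    exact ⟨minimalPeriod_tripleMap_zero hd hq ▸ (h 0).minimalPeriod_dvd, (h 2).minimalPeriod_dvd⟩
  · rintro ⟨hm_zero, hm_two⟩
    refine isPeriodicPt_tripleMap_of_forall_lt hd hq fun c hcd => ?_
    rcases lt_or_ge c 2 with hc | hc
    · exact (isPeriodicPt_tripleMap_of_lt_two hd hq hc).trans_dvd hm_zero
    · exact isPeriodicPt_tripleMap_of_minimalPeriod_two_dvd hq hc hcd hm_two

theorem orderOf_pancake_triple {n j : ℕ} (hd : 2 ≤ d) (hq : 0 < q)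
    (hjd : j + d = q * d + 2) (hn : q * d + 2 ≤ n) :
    orderOf (pancake n 1 * pancake n (j - 1) * pancake n (q * d + 2 - 1)) =
      Nat.lcm (q + 1) (minimalPeriod (tripleMap d (q * d + 2)) 2) := by
  have hj : 1 < j := by
    have := Nat.le_mul_of_pos_left d hq
    omega
  refine Nat.dvd_right_iff_eq.mp fun m => ?_
  rw [orderOf_dvd_iff_pow_eq_one, pancake_triple_pow_eq_one_iff hj hjd hn,
    forall_isPeriodicPt_tripleMap_iff hd hq, Nat.lcm_dvd_iff]

end Orbits

/-- Let `1 < j < k ≤ n` with `k ≥ 5`, and set `d = k - j`, `q = ⌊k/d⌋`, `r = k mod d`.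
Suppose `r = 2`.  Then the order of `f_1 f_{j-1} f_{k-1}` in `S_n` is: `q(q+1)` if
`d = 3`, or if `d ≥ 4` and `q` is odd; and `2q(q+1)` if `d ≥ 4` and `q` is even. -/
theorem order_pancake_one_triple_r_two (n j k d q r : ℕ) (hj : 1 < j) (hjk : j < k)
    (hkn : k ≤ n) (hk5 : 5 ≤ k) (hd : d = k - j) (hq : q = k / d) (hr : r = k % d)
    (hr2 : r = 2) :
    (d = 3 ∨ (4 ≤ d ∧ Odd q) →
      orderOf (pancake n 1 * pancake n (j - 1) * pancake n (k - 1)) = q * (q + 1)) ∧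
    (4 ≤ d ∧ Even q →
      orderOf (pancake n 1 * pancake n (j - 1) * pancake n (k - 1)) =
        2 * q * (q + 1)) := by
  have hdpos : 0 < d := by omega
  have hd_two : 2 ≤ d := by have := Nat.mod_lt k hdpos; omega
  have hqpos : 0 < q := hq ▸ Nat.div_pos (by omega) hdpos
  obtain rfl : k = q * d + 2 := by rw [← hr2, hr, hq, Nat.div_add_mod']
  rw [orderOf_pancake_triple hd_two hqpos (by omega) hkn]
  refine ⟨?_, fun ⟨hd_four, heven⟩ => ?_⟩
  · rintro (rfl | ⟨hd_four, hodd⟩)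
    · have hcop : Nat.Coprime (q + 1) q := by simp
      rw [minimalPeriod_tripleMap_three_two hqpos, hcop.lcm_eq_mul, mul_comm]
    · rw [minimalPeriod_tripleMap_two_of_four_le hd_four hqpos, lcm_succ_two_mul_of_odd hodd]
  · rw [minimalPeriod_tripleMap_two_of_four_le hd_four hqpos, lcm_succ_two_mul_of_even heven]
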